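/- arXiv:1905.02387 — 2 statements merged into one kernel-verified Lean document; each statement's English description precedes it below -/
import Mathlib

section
/- For every n ≥ 2, the number of king permutations in K_n that have no prince equals 2^k · k! if n = 4k for some positive integer k, and equals 0 otherwise. -/
/-!
If deleting an entry of a king permutation leaves a permutation that is not king, then the deletion
has made two entries adjacent both in position and in value, so the deleted entry separates them.
Hence a king has no prince exactly when each of its entries is a separator.

Suppose every entry of a king separates, and the first `4 * k` entries are already split into
blocks ordered like 2413 or 3142. A value adjacent to one outside its block is extreme in the block,
hence sits at one of the two middle positions. The entry after this prefix therefore cannot separate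
anything in the prefix, so the values just below and above it sit side by side further right.
Following where the values at distance two must go shows that the next four entries are again a
2413 or a 3142 on consecutive values. Conversely, every permutation tiled in this way is a king all
of whose entries separate. The value intervals of the blocks tile `[0, 4 * k)`, so these
permutations are the inflations of the `k !` permutations of length `k` by `2 ^ k` choices of
pattern.
-/

open Equiv

/-- The Manhattan distance between two elements of `Fin n`. -/
def fdist {n : ℕ} (a b : Fin n) : ℕ := ((a : ℤ) - (b : ℤ)).natAbs

/-- A king permutation: no two adjacent positions carry adjacent values. -/
def IsKing {n : ℕ} (σ : Equiv.Perm (Fin n)) : Prop :=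
  ∀ i j : Fin n, (j : ℕ) = (i : ℕ) + 1 → fdist (σ i) (σ j) ≠ 1

/-- Pattern containment `π ⪯ σ`. -/
def Contains {m n : ℕ} (π : Equiv.Perm (Fin m)) (σ : Equiv.Perm (Fin n)) : Prop :=
  ∃ f : Fin m ↪o Fin n, ∀ a b : Fin m, π a < π b ↔ σ (f a) < σ (f b)

/-- Strict pattern containment `π ≺ σ`. -/
def StrictContains {m n : ℕ} (π : Equiv.Perm (Fin m)) (σ : Equiv.Perm (Fin n)) : Prop :=
  Contains π σ ∧ m < n

/-- `nabla σ i` deletes the `i`-th entry of `σ` and standardizes. -/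
def nabla {n : ℕ} (σ : Equiv.Perm (Fin (n + 1))) (i : Fin (n + 1)) : Equiv.Perm (Fin n) :=
  Equiv.removeNone ((finSuccEquiv' i).symm.trans (σ.trans (finSuccEquiv' (σ i))))

/-- `nablaStar σ a` deletes the value `a` from `σ` and standardizes. -/
def nablaStar {n : ℕ} (σ : Equiv.Perm (Fin (n + 1))) (a : Fin (n + 1)) : Equiv.Perm (Fin n) :=
  nabla σ (σ⁻¹ a)

/-- The permutation [2413] (0-based one-line notation [1,3,0,2]). -/
def p2413 : Equiv.Perm (Fin 4) :=
  ⟨![1, 3, 0, 2], ![2, 0, 3, 1], by intro x; fin_cases x <;> rfl, by intro x; fin_cases x <;> rfl⟩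

/-- The permutation [3142] (0-based one-line notation [2,0,3,1]). -/
def p3142 : Equiv.Perm (Fin 4) :=
  ⟨![2, 0, 3, 1], ![1, 3, 0, 2], by intro x; fin_cases x <;> rfl, by intro x; fin_cases x <;> rfl⟩

/-- `σ i` vertically separates `σ j` from `σ k`. -/
def VSep {n : ℕ} (σ : Equiv.Perm (Fin n)) (i j k : Fin n) : Prop :=
  i ≠ j ∧ i ≠ k ∧ j ≠ k ∧ fdist i j = 1 ∧ fdist i k = 1 ∧ fdist (σ j) (σ k) = 1

/-- `σ i` horizontally separates `σ j` from `σ k`. -/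
def HSep {n : ℕ} (σ : Equiv.Perm (Fin n)) (i j k : Fin n) : Prop :=
  i ≠ j ∧ i ≠ k ∧ j ≠ k ∧ fdist (σ i) (σ j) = 1 ∧ fdist (σ i) (σ k) = 1 ∧ fdist j k = 1

/-- `σ i` separates `σ j` from `σ k`. -/
def Separates {n : ℕ} (σ : Equiv.Perm (Fin n)) (i j k : Fin n) : Prop :=
  VSep σ i j k ∨ HSep σ i j k

/-- `π` has a 2-block at positions `j`, `j+1` (0-based). -/
def HasTwoBlockAt {n : ℕ} (π : Equiv.Perm (Fin n)) (j : ℕ) : Prop :=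
  ∃ hj : j + 1 < n, fdist (π ⟨j, by omega⟩) (π ⟨j + 1, hj⟩) = 1

/-- `π` has a 3-block at positions `p`, `p+1`, `p+2` (0-based). -/
def HasThreeBlockAt {n : ℕ} (π : Equiv.Perm (Fin n)) (p : ℕ) : Prop :=
  ∃ hp : p + 2 < n, ∃ m : ℕ,
    ({(π ⟨p, by omega⟩ : ℕ), (π ⟨p + 1, by omega⟩ : ℕ), (π ⟨p + 2, by omega⟩ : ℕ)} : Finset ℕ)
      = {m, m + 1, m + 2}

section Deletion

variable {n : ℕ}

lemma fdist_comm (a b : Fin n) : fdist a b = fdist b a := by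
  unfold fdist
  omega

lemma isKing_iff {σ : Perm (Fin n)} :
    IsKing σ ↔ ∀ i j, fdist i j = 1 → fdist (σ i) (σ j) ≠ 1 := by
  refine ⟨fun h i j hij ↦ ?_, fun h i j hij ↦ h i j (by unfold fdist; omega)⟩
  obtain hlt | hgt : (j : ℕ) = i + 1 ∨ (i : ℕ) = j + 1 := by unfold fdist at hij; omega
  · exact h i j hlt
  · rw [fdist_comm]
    exact h j i hgt

lemma fdist_eq_one_iff_succAbove (i : Fin (n + 1)) {a b : Fin n} (hab : a ≠ b) :
    fdist a b = 1 ↔ fdist (i.succAbove a) (i.succAbove b) = 1 ∨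
      fdist i (i.succAbove a) = 1 ∧ fdist i (i.succAbove b) = 1 := by
  rw [Ne, Fin.ext_iff] at hab
  simp only [fdist, Fin.succAbove, Fin.lt_def, Fin.val_castSucc]
  split_ifs <;> simp only [Fin.val_castSucc, Fin.val_succ] <;> omega

variable (σ : Perm (Fin (n + 1))) (i : Fin (n + 1))

lemma succAbove_nabla (a : Fin n) : (σ i).succAbove (nabla σ i a) = σ (i.succAbove a) := by
  obtain ⟨b, hb⟩ : ∃ b, (σ i).succAbove b = σ (i.succAbove a) :=
    Fin.exists_succAbove_eq (σ.injective.ne (Fin.succAbove_ne i a))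
  have hsome :
      (finSuccEquiv' i).symm.trans (σ.trans (finSuccEquiv' (σ i))) (some a) = some b := by
    simp [← hb]
  have hnabla : some (nabla σ i a) = some b := (removeNone_some _ ⟨b, hsome⟩).trans hsome
  rw [Option.some_injective _ hnabla, hb]

variable {σ i}

lemma separates_succAbove_iff (hσ : IsKing σ) (a b : Fin n) :
    Separates σ i (i.succAbove a) (i.succAbove b) ↔
      fdist a b = 1 ∧ fdist (nabla σ i a) (nabla σ i b) = 1 := by
  rcases eq_or_ne a b with rfl | hab
  · simp [Separates, VSep, HSep, fdist]
  rw [fdist_eq_one_iff_succAbove i hab,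
    fdist_eq_one_iff_succAbove (σ i) ((nabla σ i).injective.ne hab), succAbove_nabla,
    succAbove_nabla]
  have hadj := isKing_iff.1 hσ (i.succAbove a) (i.succAbove b)
  have hdel := isKing_iff.1 hσ i (i.succAbove a)
  have ha := Fin.ne_succAbove i a
  have hb := Fin.ne_succAbove i b
  have hne : i.succAbove a ≠ i.succAbove b := Fin.succAbove_right_injective.ne hab
  simp only [Separates, VSep, HSep]
  tauto

lemma not_isKing_nabla_iff (hσ : IsKing σ) :
    ¬ IsKing (nabla σ i) ↔ ∃ j k, Separates σ i j k := by
  have hne {j k} (h : Separates σ i j k) : j ≠ i ∧ k ≠ i := by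
    obtain h | h := h <;> exact ⟨h.1.symm, h.2.1.symm⟩
  simp only [isKing_iff, not_forall, not_not, exists_prop, ← separates_succAbove_iff hσ]
  refine ⟨fun ⟨a, b, h⟩ ↦ ⟨_, _, h⟩, fun ⟨j, k, h⟩ ↦ ?_⟩
  obtain ⟨a, rfl⟩ := Fin.exists_succAbove_eq (hne h).1
  obtain ⟨b, rfl⟩ := Fin.exists_succAbove_eq (hne h).2
  exact ⟨a, b, h⟩

lemma eq_succAbove_of_strictMono {f : Fin n → Fin (n + 1)} (hf : StrictMono f)
    (hi : ∀ a, f a ≠ i) : f = i.succAbove := by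
  have hcard : ({i}ᶜ : Finset (Fin (n + 1))).card = n := by simp [Finset.card_compl]
  rw [Finset.orderEmbOfFin_unique hcard (fun a ↦ by simpa using hi a) hf,
    Finset.orderEmbOfFin_compl_singleton_eq_succAboveOrderEmb]
  rfl

lemma contains_iff_exists_nabla_eq {τ : Perm (Fin n)} :
    Contains τ σ ↔ ∃ i, nabla σ i = τ := by
  constructor
  · rintro ⟨f, hf⟩
    obtain ⟨i, hi⟩ : ∃ i, ∀ a, f a ≠ i := by
      by_contra! hsurj
      simpa using Fintype.card_le_of_surjective f hsurj
    have hpos : ⇑f = i.succAbove := eq_succAbove_of_strictMono f.strictMono hi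
    have hval : (fun v ↦ σ (f (τ.symm v))) = (σ i).succAbove :=
      eq_succAbove_of_strictMono (fun v w hvw ↦ (hf _ _).1 (by simpa using hvw))
        (fun v ↦ σ.injective.ne (hi _))
    refine ⟨i, Equiv.ext fun a ↦ (σ i).succAbove_right_injective ?_⟩
    simp only [succAbove_nabla, ← hpos, ← hval, symm_apply_apply]
  · rintro ⟨i, rfl⟩
    refine ⟨Fin.succAboveOrderEmb i, fun a b ↦ ?_⟩
    simp only [Fin.succAboveOrderEmb_apply, ← succAbove_nabla, Fin.succAbove_lt_succAbove_iff]

lemma not_exists_prince_iff (hσ : IsKing σ) :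
    (¬ ∃ τ : Perm (Fin n), IsKing τ ∧ StrictContains τ σ) ↔ ∀ i, ∃ j k, Separates σ i j k := by
  simp only [← not_isKing_nabla_iff hσ, ← not_exists]
  simp [StrictContains, contains_iff_exists_nabla_eq]

end Deletion

section Blocks

/-- The two simple permutations of length four, `2413` for `true` and `3142` for `false`. -/
def pattern (b : Bool) : Perm (Fin 4) := if b then p2413 else p3142

/-- The four consecutive entries of `s` from position `p` on are an interval of integers with
minimum `c`, arranged in the order `pattern b`. -/
def IsBlock (s : ℕ → ℤ) (b : Bool) (p : ℕ) (c : ℤ) : Prop :=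
  ∀ i : Fin 4, s (p + i) = c + (pattern b i : ℕ)

/-- The first `4 * k` entries of `s` split into `k` consecutive blocks of length four. -/
def IsTiled (k : ℕ) (s : ℕ → ℤ) : Prop := ∀ m < k, ∃ b c, IsBlock s b (4 * m) c

/-- The king condition for the first `n` entries of an integer sequence. -/
def IsKingSeq (n : ℕ) (s : ℕ → ℤ) : Prop := ∀ p, p + 1 < n → (s (p + 1) - s p).natAbs ≠ 1

/-- The entry at position `p` separates, vertically or horizontally, two of the first `n` entries
of `s`. -/
def IsSeparator (n : ℕ) (s : ℕ → ℤ) (p : ℕ) : Prop :=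
  (∃ q, q + 1 = p ∧ p + 1 < n ∧ (s (p + 1) - s q).natAbs = 1) ∨
    ∃ q, q + 1 < n ∧ (s q - s p).natAbs = 1 ∧ (s (q + 1) - s p).natAbs = 1

variable {s : ℕ → ℤ} {n k p : ℕ} {b b' : Bool} {c c' : ℤ}

lemma isBlock_true_iff : IsBlock s true p c ↔
    s p = c + 1 ∧ s (p + 1) = c + 3 ∧ s (p + 2) = c ∧ s (p + 3) = c + 2 := by
  simp [IsBlock, pattern, p2413, Fin.forall_fin_succ]

lemma isBlock_false_iff : IsBlock s false p c ↔
    s p = c + 2 ∧ s (p + 1) = c ∧ s (p + 2) = c + 3 ∧ s (p + 3) = c + 1 := by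
  simp [IsBlock, pattern, p3142, Fin.forall_fin_succ]

namespace IsBlock

lemma entries_eq (h : IsBlock s b p c) :
    (b = true ∧ s p = c + 1 ∧ s (p + 1) = c + 3 ∧ s (p + 2) = c ∧ s (p + 3) = c + 2) ∨
      (b = false ∧ s p = c + 2 ∧ s (p + 1) = c ∧ s (p + 2) = c + 3 ∧ s (p + 3) = c + 1) := by
  cases b
  · exact .inr ⟨rfl, isBlock_false_iff.1 h⟩
  · exact .inl ⟨rfl, isBlock_true_iff.1 h⟩

lemma exists_eq_iff (h : IsBlock s b p c) {x : ℤ} :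
    (∃ i < 4, s (p + i) = x) ↔ c ≤ x ∧ x ≤ c + 3 := by
  constructor
  · rintro ⟨i, hi, rfl⟩
    have := h ⟨i, hi⟩
    dsimp only at this
    omega
  · intro hx
    obtain ⟨i, hi⟩ := (pattern b).surjective ⟨(x - c).toNat, by omega⟩
    refine ⟨i, i.2, ?_⟩
    rw [h i, hi]
    dsimp only
    omega

lemma unique (h : IsBlock s b p c) (h' : IsBlock s b' p c') : b = b' ∧ c = c' := by
  obtain ⟨rfl, h⟩ | ⟨rfl, h⟩ := h.entries_eq <;> obtain ⟨rfl, h'⟩ | ⟨rfl, h'⟩ := h'.entries_eq <;>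
    simp only [reduceCtorEq, true_and, false_and] <;> omega

lemma eq_of_mem (hs : s.Injective) {m m' : ℕ} (h : IsBlock s b (4 * m) c)
    (h' : IsBlock s b' (4 * m') c') {x : ℤ} (hx : c ≤ x ∧ x ≤ c + 3)
    (hx' : c' ≤ x ∧ x ≤ c' + 3) : m = m' ∧ c = c' := by
  obtain ⟨i, hi, hix⟩ := h.exists_eq_iff.2 hx
  obtain ⟨j, hj, hjx⟩ := h'.exists_eq_iff.2 hx'
  have hpos := hs (hix.trans hjx.symm)
  obtain rfl : m = m' := by omega
  exact ⟨rfl, (h.unique h').2⟩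

lemma min_nonneg_and_lt (himage : s '' Set.Iio (4 * k) = Set.Ico 0 (4 * k : ℤ)) {m : ℕ}
    (hm : m < k) (h : IsBlock s b (4 * m) c) : 0 ≤ c ∧ c < 4 * k := by
  obtain ⟨i, hi, rfl⟩ := h.exists_eq_iff.2 ⟨le_refl c, by omega⟩
  rw [← Set.mem_Ico, ← himage]
  exact Set.mem_image_of_mem s (Set.mem_Iio.2 (by omega))

end IsBlock

namespace IsTiled

lemma exists_isBlock_mem (ht : IsTiled k s) (hp : p < 4 * k) :
    ∃ b c, IsBlock s b (4 * (p / 4)) c ∧ c ≤ s p ∧ s p ≤ c + 3 := by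
  obtain ⟨b, c, hblock⟩ := ht (p / 4) (by omega)
  exact ⟨b, c, hblock, hblock.exists_eq_iff.1 ⟨p % 4, by omega, by rw [Nat.div_add_mod]⟩⟩

/-- A value adjacent to one outside the block is the least or the greatest value of its block, and
`2413` and `3142` carry these in the two middle positions. -/
lemma mod_four_of_adjacent (hs : s.Injective) (ht : IsTiled k s) {q : ℕ} (hq : q < 4 * k)
    (hp : 4 * k ≤ p) (hadj : (s p - s q).natAbs = 1) : q % 4 = 1 ∨ q % 4 = 2 := by
  obtain ⟨b, c, hblock, hin⟩ := ht.exists_isBlock_mem hq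
  have hout : ¬ (c ≤ s p ∧ s p ≤ c + 3) := by
    rw [← hblock.exists_eq_iff]
    rintro ⟨i, hi, he⟩
    have := hs he
    omega
  have hextreme : s q = c ∨ s q = c + 3 := by omega
  have hentries := hblock.entries_eq
  by_contra hmiddle
  obtain h | h : q = 4 * (q / 4) ∨ q = 4 * (q / 4) + 3 := by omega
  all_goals rw [h] at hextreme; omega

end IsTiled

/-- An entry that separates horizontally has both neighbouring values next to each other, so the
position of one of them is next to the position of the other. -/
lemma IsSeparator.of_entry_eq (hs : s.Injective) (h : IsSeparator n s p) {δ : ℤ}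
    (hδ : δ = 1 ∨ δ = -1) {a : ℕ} (ha : s a = s p + δ) :
    (∃ q, q + 1 = p ∧ p + 1 < n ∧ (s (p + 1) - s q).natAbs = 1) ∨
      ∃ a' < n, (a' = a + 1 ∨ a = a' + 1) ∧ s a' = s p - δ := by
  refine h.imp_right ?_
  rintro ⟨q, hq, hleft, hright⟩
  have hne : s q ≠ s (q + 1) := hs.ne (by omega)
  obtain hqa | hqa : s q = s a ∨ s (q + 1) = s a := by omega
  · obtain rfl := hs hqa
    exact ⟨q + 1, hq, .inl rfl, by omega⟩
  · obtain rfl := hs hqa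
    exact ⟨q, by omega, .inr rfl, by omega⟩

/-- Locate the values `s p ± 2 * ε`: the separators `j` and `j + 1` each place one of them, either
next to `p` or next to the pair `j`, `j + 1`. -/
lemma eq_add_two_of_horizontal (hs : s.Injective) (hsep : ∀ i < n, IsSeparator n s i) {ε : ℤ}
    (hε : ε = 1 ∨ ε = -1) {j : ℕ} (hpj : p + 1 < j) (hj : j + 1 < n) (hleft : s j = s p - ε)
    (hright : s (j + 1) = s p + ε) (hprev : ∀ q, q + 1 = p → (s q - s p).natAbs ≠ 2) :
    j = p + 2 ∧ s (p + 1) = s p + 2 * ε := by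
  have hj1_sep : s (j + 1 + 1) = s p - 2 * ε ∨ s (p + 1) = s p + 2 * ε := by
    obtain ⟨i, hij, -, hi⟩ | ⟨a, -, rfl | ha, hval⟩ :=
      (hsep (j + 1) hj).of_entry_eq hs (δ := -ε) (a := p) (by omega) (by omega)
    · obtain rfl : i = j := by omega
      have := hs.ne (show i + 1 + 1 ≠ p by omega)
      exact .inl (by omega)
    · exact .inr (by omega)
    · exact absurd (hprev a ha.symm) (by omega)
  have hj_sep : (∃ i, i + 1 = j ∧ s i = s p + 2 * ε) ∨ s (p + 1) = s p - 2 * ε := by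
    obtain ⟨i, rfl, -, hi⟩ | ⟨a, -, rfl | ha, hval⟩ :=
      (hsep j (by omega)).of_entry_eq hs hε (a := p) (by omega)
    · have := hs.ne (show i ≠ p by omega)
      exact .inl ⟨i, rfl, by omega⟩
    · exact .inr (by omega)
    · exact absurd (hprev a ha.symm) (by omega)
  obtain ⟨i, rfl, hi⟩ | hdown := hj_sep
  · suffices hip : i = p + 1 by subst hip; exact ⟨rfl, hi⟩
    obtain hlast | hup := hj1_sep
    · obtain ⟨r, rfl, -, hr⟩ | ⟨a, -, rfl | ha, hval⟩ :=
        (hsep i (by omega)).of_entry_eq hs (δ := -ε) (a := i + 1 + 1) (by omega) (by omega)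
      · have := hs.ne (show r ≠ r + 1 + 1 + 1 + 1 by omega)
        rw [hs (show s r = s p by omega)]
      · omega
      · obtain rfl : i + 1 = a := by omega
        omega
    · exact hs (hi.trans hup.symm)
  · obtain hlast | hup := hj1_sep
    · have := hs (hdown.trans hlast.symm)
      omega
    · omega

namespace IsTiled

lemma exists_horizontal (hs : s.Injective) (ht : IsTiled k s)
    (hking : IsKingSeq n s) (hsep : IsSeparator n s (4 * k)) :
    ∃ (j : ℕ) (ε : ℤ), 4 * k + 1 < j ∧ j + 1 < n ∧ (ε = 1 ∨ ε = -1) ∧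
      s j = s (4 * k) - ε ∧ s (j + 1) = s (4 * k) + ε := by
  obtain ⟨q, hq, -, hadj⟩ | ⟨q, hqn, hleft, hright⟩ := hsep
  · have := ht.mod_four_of_adjacent hs (q := q) (by omega) (by omega) hadj
    omega
  have hne : s q ≠ s (q + 1) := hs.ne (by omega)
  have hq : 4 * k ≤ q := by
    by_contra! hlt
    have hq_mod := ht.mod_four_of_adjacent hs hlt le_rfl (by omega)
    obtain hlt' | heq : q + 1 < 4 * k ∨ q + 1 = 4 * k := by omega
    · have hq1_mod := ht.mod_four_of_adjacent hs hlt' le_rfl (by omega)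
      obtain ⟨m, rfl⟩ : ∃ m, q = 4 * m + 1 := ⟨q / 4, by omega⟩
      obtain ⟨b, c, hblock⟩ := ht m (by omega)
      have := hblock.entries_eq
      change (s (4 * m + 2) - _).natAbs = 1 at hright
      omega
    · omega
  have hq_ne : q ≠ 4 * k := by rintro rfl; simp at hleft
  have hq_ne_succ : q ≠ 4 * k + 1 := by rintro rfl; exact hking _ (by omega) hleft
  exact ⟨q, s (q + 1) - s (4 * k), by omega, hqn, by omega, by omega, by omega⟩

lemma succ (hs : s.Injective) (ht : IsTiled k s) (hking : IsKingSeq n s)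
    (hsep : ∀ i < n, IsSeparator n s i) (hkn : 4 * k < n) :
    4 * k + 3 < n ∧ IsTiled (k + 1) s := by
  obtain ⟨j, ε, hkj, hjn, hε, hleft, hright⟩ :=
    ht.exists_horizontal hs hking (hsep _ hkn)
  have hprev (q : ℕ) (hq : q + 1 = 4 * k) : (s q - s (4 * k)).natAbs ≠ 2 := by
    intro hdist
    obtain ⟨i, hi, hadj⟩ : ∃ i, 4 * k ≤ i ∧ (s i - s q).natAbs = 1 := by
      obtain h | h : s q = s (4 * k) - 2 * ε ∨ s q = s (4 * k) + 2 * ε := by omega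
      · exact ⟨j, by omega, by omega⟩
      · exact ⟨j + 1, by omega, by omega⟩
    have := ht.mod_four_of_adjacent hs (q := q) (by omega) hi hadj
    omega
  obtain ⟨rfl, hnext⟩ := eq_add_two_of_horizontal hs hsep hε hkj hjn hleft hright hprev
  refine ⟨hjn, fun m hm ↦ ?_⟩
  obtain hlt | rfl := Nat.lt_succ_iff_lt_or_eq.1 hm
  · exact ht m hlt
  change s (4 * m + 3) = _ at hright
  obtain rfl | rfl := hε
  · exact ⟨true, s (4 * m) - 1, isBlock_true_iff.2 (by omega)⟩
  · exact ⟨false, s (4 * m) - 2, isBlock_false_iff.2 (by omega)⟩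

lemma exists_of_isSeparator (hs : s.Injective) (hking : IsKingSeq n s)
    (hsep : ∀ i < n, IsSeparator n s i) :
    ∃ k, n = 4 * k ∧ IsTiled k s := by
  have htiled : ∀ k, 4 * k ≤ n → IsTiled k s := by
    intro k
    induction k with
    | zero => exact fun _ m hm ↦ absurd hm m.not_lt_zero
    | succ k ih => exact fun hk ↦ ((ih (by omega)).succ hs hking hsep (by omega)).2
  refine ⟨n / 4, ?_, htiled _ (by omega)⟩
  by_contra hne
  have := ((htiled (n / 4) (by omega)).succ hs hking hsep (by omega)).1
  omega

end IsTiled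

namespace IsTiled

lemma isKingSeq (hs : s.Injective) (ht : IsTiled k s) : IsKingSeq (4 * k) s := by
  intro p hp hadj
  obtain ⟨m, hm⟩ : ∃ m, p = 4 * m ∨ p = 4 * m + 1 ∨ p = 4 * m + 2 ∨ p = 4 * m + 3 :=
    ⟨p / 4, by omega⟩
  obtain ⟨b, c, hblock⟩ := ht m (by omega)
  have hentries := hblock.entries_eq
  obtain rfl | rfl | rfl | rfl := hm
  · omega
  · change (s (4 * m + 2) - _).natAbs = 1 at hadj
    omega
  · change (s (4 * m + 3) - _).natAbs = 1 at hadj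
    omega
  · have hinit : IsTiled (m + 1) s := fun i hi ↦ ht i (by omega)
    have := hinit.mod_four_of_adjacent hs (by omega) (by omega) hadj
    omega

lemma isSeparator (ht : IsTiled k s) (hp : p < 4 * k) : IsSeparator (4 * k) s p := by
  obtain ⟨m, hm⟩ : ∃ m, p = 4 * m ∨ p = 4 * m + 1 ∨ p = 4 * m + 2 ∨ p = 4 * m + 3 :=
    ⟨p / 4, by omega⟩
  obtain ⟨b, c, hblock⟩ := ht m (by omega)
  have hentries := hblock.entries_eq
  obtain rfl | rfl | rfl | rfl := hm
  · exact .inr ⟨4 * m + 2, by omega, by omega, by change (s (4 * m + 3) - _).natAbs = 1; omega⟩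
  · exact .inl ⟨4 * m, rfl, by omega, by change (s (4 * m + 2) - _).natAbs = 1; omega⟩
  · exact .inl ⟨4 * m + 1, rfl, by omega, by change (s (4 * m + 3) - _).natAbs = 1; omega⟩
  · exact .inr ⟨4 * m, by omega, by omega, by omega⟩

end IsTiled

lemma isKingSeq_and_forall_isSeparator_iff (hs : s.Injective) :
    (IsKingSeq n s ∧ ∀ p < n, IsSeparator n s p) ↔ ∃ k, n = 4 * k ∧ IsTiled k s := by
  constructor
  · rintro ⟨hking, hsep⟩
    exact IsTiled.exists_of_isSeparator hs hking hsep
  · rintro ⟨k, rfl, ht⟩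
    exact ⟨ht.isKingSeq hs, fun p ↦ ht.isSeparator⟩

/-- Strong induction on the minimum `x`: the block containing `x - 1` starts at a smaller multiple
of four, and must end at `x - 1` because it does not contain `x`. -/
lemma IsTiled.four_dvd_of_isBlock (hs : s.Injective) (ht : IsTiled k s)
    (himage : s '' Set.Iio (4 * k) = Set.Ico 0 (4 * k : ℤ)) {m : ℕ} (hm : m < k)
    (h : IsBlock s b (4 * m) c) : 4 ∣ c := by
  obtain ⟨x, rfl⟩ := Int.eq_ofNat_of_zero_le (h.min_nonneg_and_lt himage hm).1
  induction x using Nat.strong_induction_on generalizing m b with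
  | _ x ih =>
  obtain rfl | hpos := x.eq_zero_or_pos
  · simp
  have hx := (h.min_nonneg_and_lt himage hm).2
  obtain ⟨p, hp, hpx⟩ : (x - 1 : ℤ) ∈ s '' Set.Iio (4 * k) :=
    himage ▸ Set.mem_Ico.2 (by omega)
  rw [Set.mem_Iio] at hp
  obtain ⟨b', c', hblock, hmem⟩ := ht.exists_isBlock_mem hp
  have hc' := hblock.min_nonneg_and_lt himage (by omega)
  obtain ⟨y, rfl⟩ := Int.eq_ofNat_of_zero_le hc'.1
  have hdvd := ih y (by omega) (by omega) hblock
  by_contra hndvd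
  have := (h.eq_of_mem hs hblock (x := x) (by omega) (by omega)).2
  omega

end Blocks

section Entry

variable {n k : ℕ}

/-- The one-line notation of `σ` as an integer sequence, continued by the identity beyond `n` so
that it stays injective. -/
def entry (σ : Perm (Fin n)) (p : ℕ) : ℤ := if h : p < n then (σ ⟨p, h⟩ : ℕ) else p

lemma entry_val (σ : Perm (Fin n)) (i : Fin n) : entry σ i = (σ i : ℕ) := dif_pos i.2

lemma entry_of_le (σ : Perm (Fin n)) {p : ℕ} (hp : n ≤ p) : entry σ p = p := dif_neg hp.not_gt

lemma entry_lt_iff (σ : Perm (Fin n)) {p : ℕ} : entry σ p < n ↔ p < n := by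
  obtain hp | hp := lt_or_ge p n
  · lift p to Fin n using hp
    simp [entry_val]
  · simp [entry_of_le σ hp]

lemma entry_injective (σ : Perm (Fin n)) : (entry σ).Injective := by
  intro p q h
  have hpq : p < n ↔ q < n := by rw [← entry_lt_iff σ, h, entry_lt_iff]
  obtain hp | hp := lt_or_ge p n
  · lift q to Fin n using hpq.1 hp
    lift p to Fin n using hp
    rw [entry_val, entry_val, Nat.cast_inj, Fin.val_inj] at h
    rw [σ.injective h]
  · rw [entry_of_le σ hp, entry_of_le σ (by omega)] at h
    exact_mod_cast h

lemma image_entry (σ : Perm (Fin n)) : entry σ '' Set.Iio n = Set.Ico 0 (n : ℤ) := by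
  ext v
  constructor
  · rintro ⟨p, hp, rfl⟩
    lift p to Fin n using hp
    simp [entry_val]
  · rintro ⟨hv, hvn⟩
    lift v to ℕ using hv
    refine ⟨σ.symm ⟨v, by omega⟩, (σ.symm _).2, ?_⟩
    simp [entry_val]

lemma fdist_apply (σ : Perm (Fin n)) (i j : Fin n) :
    fdist (σ i) (σ j) = (entry σ i - entry σ j).natAbs := by
  rw [entry_val, entry_val, fdist]

lemma isKing_iff_isKingSeq {σ : Perm (Fin n)} : IsKing σ ↔ IsKingSeq n (entry σ) := by
  constructor
  · intro h p hp
    have := h ⟨p, by omega⟩ ⟨p + 1, hp⟩ rfl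
    rwa [fdist_comm, fdist_apply] at this
  · intro h i j hij
    rw [fdist_comm, fdist_apply, hij]
    exact h i (by omega)

lemma exists_separates_iff {σ : Perm (Fin n)} {i : Fin n} :
    (∃ j k, Separates σ i j k) ↔ IsSeparator n (entry σ) i := by
  constructor
  · rintro ⟨j, k, ⟨-, -, hjk, hij, hik, hval⟩ | ⟨-, -, -, hij, hik, hpos⟩⟩
    · rw [fdist_apply] at hval
      unfold fdist at hij hik
      obtain h | h : (j : ℕ) + 1 = i ∧ (k : ℕ) = i + 1 ∨ (k : ℕ) + 1 = i ∧ (j : ℕ) = i + 1 := by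
        omega
      · exact .inl ⟨j, h.1, by omega, by rw [← h.2]; omega⟩
      · exact .inl ⟨k, h.1, by omega, by rw [← h.2]; omega⟩
    · rw [fdist_apply] at hij hik
      unfold fdist at hpos
      obtain h | h : (k : ℕ) = j + 1 ∨ (j : ℕ) = k + 1 := by omega
      · exact .inr ⟨j, by omega, by omega, by rw [← h]; omega⟩
      · exact .inr ⟨k, by omega, by omega, by rw [← h]; omega⟩
  · rintro (⟨q, hq, hin, hval⟩ | ⟨q, hqn, hleft, hright⟩)
    · refine ⟨⟨q, by omega⟩, ⟨i + 1, hin⟩, .inl ?_⟩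
      simp only [VSep, fdist_apply, ne_eq, Fin.ext_iff]
      simp only [fdist]
      omega
    · have hq : q ≠ i := by rintro rfl; simp at hleft
      have hq' : q + 1 ≠ i := by intro h; simp [h] at hright
      refine ⟨⟨q, by omega⟩, ⟨q + 1, hqn⟩, .inr ?_⟩
      simp only [HSep, fdist_apply, ne_eq, Fin.ext_iff]
      simp only [fdist]
      omega

lemma isKing_and_not_exists_prince_iff {σ : Perm (Fin n)} :
    (IsKing σ ∧ ¬ ∃ τ : Perm (Fin (n - 1)), IsKing τ ∧ StrictContains τ σ) ↔
      ∃ k, n = 4 * k ∧ IsTiled k (entry σ) := by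
  rw [← isKingSeq_and_forall_isSeparator_iff (entry_injective σ), ← isKing_iff_isKingSeq]
  refine and_congr_right fun hking ↦ ?_
  cases n with
  | zero => simp [StrictContains]
  | succ n =>
    rw [Nat.add_sub_cancel, not_exists_prince_iff hking]
    simp only [exists_separates_iff, Fin.forall_iff]

end Entry

section Inflation

variable {k : ℕ}

/-- The inflation of `π` that replaces its `m`-th entry by a copy of `pattern (b m)`. -/
def inflate (b : Fin k → Bool) (π : Perm (Fin k)) : Perm (Fin (k * 4)) :=
  finProdFinEquiv.permCongr (prodShear π fun m ↦ pattern (b m))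

lemma inflate_apply (b : Fin k → Bool) (π : Perm (Fin k)) (m : Fin k) (i : Fin 4) :
    inflate b π (finProdFinEquiv (m, i)) = finProdFinEquiv (π m, pattern (b m) i) := by
  rw [inflate, permCongr_apply, symm_apply_apply]
  rfl

lemma isBlock_entry_iff {σ : Perm (Fin (k * 4))} {b : Bool} {m q : Fin k} :
    IsBlock (entry σ) b (4 * m) (4 * (q : ℕ)) ↔
      ∀ i, σ (finProdFinEquiv (m, i)) = finProdFinEquiv (q, pattern b i) := by
  have hval (m : Fin k) (i : Fin 4) : (finProdFinEquiv (m, i) : ℕ) = 4 * m + i := by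
    rw [finProdFinEquiv_apply_val, add_comm]
  refine forall_congr' fun i ↦ ?_
  rw [← hval, entry_val, Fin.ext_iff, hval]
  norm_cast

lemma isBlock_inflate (b : Fin k → Bool) (π : Perm (Fin k)) (m : Fin k) :
    IsBlock (entry (inflate b π)) (b m) (4 * m) (4 * (π m : ℕ)) :=
  isBlock_entry_iff.2 (inflate_apply b π m)

lemma isTiled_inflate (b : Fin k → Bool) (π : Perm (Fin k)) : IsTiled k (entry (inflate b π)) :=
  fun m hm ↦ ⟨_, _, isBlock_inflate b π ⟨m, hm⟩⟩

lemma eq_inflate_of_isBlock {σ : Perm (Fin (k * 4))} {b : Fin k → Bool} {π : Perm (Fin k)}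
    (h : ∀ m : Fin k, IsBlock (entry σ) (b m) (4 * m) (4 * (π m : ℕ))) : inflate b π = σ := by
  ext1 x
  obtain ⟨⟨m, i⟩, rfl⟩ := finProdFinEquiv.surjective x
  rw [inflate_apply, isBlock_entry_iff.1 (h m)]

lemma inflate_injective2 : Function.Injective2 (inflate (k := k)) := by
  intro b b' π π' h
  have heq (m : Fin k) := (isBlock_inflate b π m).unique (h ▸ isBlock_inflate b' π' m)
  exact ⟨funext fun m ↦ (heq m).1, Equiv.ext fun m ↦ Fin.ext (by have := (heq m).2; omega)⟩

lemma exists_inflate_eq {σ : Perm (Fin (k * 4))} (ht : IsTiled k (entry σ)) :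
    ∃ b π, inflate b π = σ := by
  have hs := entry_injective σ
  have himage : entry σ '' Set.Iio (4 * k) = Set.Ico 0 (4 * k : ℤ) := by
    simpa [mul_comm k 4] using image_entry σ
  have haligned (m : Fin k) :
      ∃ (b : Bool) (q : Fin k), IsBlock (entry σ) b (4 * m) (4 * (q : ℕ)) := by
    obtain ⟨b, c, hblock⟩ := ht m m.2
    obtain ⟨q, rfl⟩ := ht.four_dvd_of_isBlock hs himage m.2 hblock
    have := hblock.min_nonneg_and_lt himage m.2
    lift q to ℕ using by omega
    exact ⟨b, ⟨q, by omega⟩, hblock⟩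
  choose b π hblock using haligned
  have hπ : π.Injective := by
    intro m m' h
    have := (hblock m).eq_of_mem hs (hblock m') (x := 4 * (π m : ℕ)) (by omega) (by omega)
    exact Fin.ext this.1
  exact ⟨b, ofBijective π (Finite.injective_iff_bijective.1 hπ), eq_inflate_of_isBlock hblock⟩

lemma card_isTiled :
    Nat.card {σ : Perm (Fin (k * 4)) // IsTiled k (entry σ)} = 2 ^ k * k.factorial := by
  let F (x : (Fin k → Bool) × Perm (Fin k)) : {σ : Perm (Fin (k * 4)) // IsTiled k (entry σ)} :=
    ⟨inflate x.1 x.2, isTiled_inflate x.1 x.2⟩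
  have hF : F.Bijective := by
    refine ⟨fun x y h ↦ Prod.ext_iff.2 (inflate_injective2 (congrArg Subtype.val h)), ?_⟩
    rintro ⟨σ, hσ⟩
    obtain ⟨b, π, h⟩ := exists_inflate_eq hσ
    exact ⟨(b, π), Subtype.ext h⟩
  rw [← Nat.card_eq_of_bijective F hF]
  simp [Fintype.card_perm]

end Inflation

/-- for `n ≥ 2`, the number of kings of length `n` without a prince is
`2^k · k!` if `n = 4k` (`k ≥ 1`), and `0` otherwise. -/
theorem count_kings_without_prince (n : ℕ) (hn : 2 ≤ n) :
    (∀ k : ℕ, 0 < k → n = 4 * k →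
      Nat.card {σ : Equiv.Perm (Fin n) // IsKing σ ∧
        ¬ ∃ τ : Equiv.Perm (Fin (n - 1)), IsKing τ ∧ StrictContains τ σ}
        = 2 ^ k * Nat.factorial k) ∧
    ((¬ ∃ k : ℕ, 0 < k ∧ n = 4 * k) →
      Nat.card {σ : Equiv.Perm (Fin n) // IsKing σ ∧
        ¬ ∃ τ : Equiv.Perm (Fin (n - 1)), IsKing τ ∧ StrictContains τ σ} = 0) := by
  constructor
  · rintro k - rfl
    have hiff (σ : Perm (Fin (4 * k))) : (IsKing σ ∧
        ¬ ∃ τ : Perm (Fin (4 * k - 1)), IsKing τ ∧ StrictContains τ σ) ↔ IsTiled k (entry σ) := by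
      rw [isKing_and_not_exists_prince_iff]
      refine ⟨fun ⟨l, hl, ht⟩ ↦ ?_, fun ht ↦ ⟨k, rfl, ht⟩⟩
      obtain rfl : l = k := by omega
      exact ht
    rw [Nat.card_congr (Equiv.subtypeEquivRight hiff), mul_comm 4 k, card_isTiled]
  · intro hn4
    have hempty : IsEmpty {σ : Perm (Fin n) // IsKing σ ∧
        ¬ ∃ τ : Perm (Fin (n - 1)), IsKing τ ∧ StrictContains τ σ} := by
      refine ⟨fun ⟨σ, hσ⟩ ↦ ?_⟩
      obtain ⟨k, hk, -⟩ := isKing_and_not_exists_prince_iff.1 hσ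
      exact hn4 ⟨k, by omega, hk⟩
    exact Nat.card_of_isEmpty
end

section
/- Let σ ∈ K_n with n > 5. Suppose there is exactly one king permutation π with π ≺ σ and π ∈ ℍ, and that every king permutation π′ with π′ ≺ σ and π ⋠ π′ (π not contained in π′) avoids [3142] or avoids [2413]. Then μ(σ) = 0. -/
open Equiv

open scoped Classical in
/-- The Möbius function of the poset of king permutations:
`μ([1]) = 1` and, for longer kings, `μ(σ) = -∑ μ(τ)` over all king permutations `τ ≺ σ`. -/
noncomputable def kingMu : (n : ℕ) → Equiv.Perm (Fin n) → ℤ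
  | 0, _ => 1
  | 1, _ => 1
  | n + 2, σ =>
    - ∑ l ∈ (Finset.Ico 1 (n + 2)).attach,
        ∑ τ ∈ Finset.univ.filter
            (fun τ : Equiv.Perm (Fin l.1) => IsKing τ ∧ StrictContains τ σ),
          kingMu l.1 τ
termination_by n _ => n
decreasing_by
  have := l.2
  simp only [Finset.mem_Ico] at this
  omega

/-- The permutation [24153] (0-based one-line notation [1,3,0,4,2]). -/
def p24153 : Equiv.Perm (Fin 5) :=
  ⟨![1, 3, 0, 4, 2], ![2, 0, 4, 1, 3], by intro x; fin_cases x <;> rfl, by intro x; fin_cases x <;> rfl⟩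

/-- The permutation [35142] (0-based one-line notation [2,4,0,3,1]). -/
def p35142 : Equiv.Perm (Fin 5) :=
  ⟨![2, 4, 0, 3, 1], ![2, 4, 0, 3, 1], by intro x; fin_cases x <;> rfl, by intro x; fin_cases x <;> rfl⟩

/-- The permutation [42513] (0-based one-line notation [3,1,4,0,2]). -/
def p42513 : Equiv.Perm (Fin 5) :=
  ⟨![3, 1, 4, 0, 2], ![3, 1, 4, 0, 2], by intro x; fin_cases x <;> rfl, by intro x; fin_cases x <;> rfl⟩

/-- The permutation [31524] (0-based one-line notation [2,0,4,1,3]). -/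
def p31524 : Equiv.Perm (Fin 5) :=
  ⟨![2, 0, 4, 1, 3], ![1, 3, 0, 4, 2], by intro x; fin_cases x <;> rfl, by intro x; fin_cases x <;> rfl⟩

/-- The set ℍ = {[24153],[35142],[42513],[31524]}. -/
def Hset : Set (Equiv.Perm (Fin 5)) := {p24153, p35142, p42513, p31524}

/-!
A permutation of length at least 2 avoiding [2413] and [3142] is separable: it splits as a direct or
a skew sum, hence, by recursion, contains two entries adjacent both in position and in value. So
every king permutation of length at least 2 contains [2413] or [3142].

The defining recursion says that `μ` sums to 0 over the king permutations contained in any given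
king permutation `π` of length at least 2. Hence `μ(σ) = 0` for `π ≺ σ` as soon as `μ` vanishes on
the kings `τ ≺ σ` outside that set, and by induction it is enough to know this vanishing for the
`τ` not comparable to `π`. With `π ∈ {[2413], [3142]}` this shows that `μ` vanishes on kings of
length at least 5 that avoid one of the two patterns; applied to any `π` containing both patterns,
such as an element of `ℍ`, it then gives the theorem.
-/

section Separable

variable {α β : Type*} [LinearOrder α] [LinearOrder β] {f : α → β} {A B S : Finset α} {m x y : α}

/-- `f`, read as a sequence indexed by `α`, contains neither of the patterns [2413] and [3142]. -/
def IsSeparableSeq (f : α → β) : Prop :=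
  ∀ a b c d : α, a < b → b < c → c < d →
    ¬ (f c < f a ∧ f a < f d ∧ f d < f b) ∧ ¬ (f b < f d ∧ f d < f a ∧ f a < f c)

/-- In the graph of `f`, every point over `A` lies to the left of and below every point over `B`.
Composing `f` with `OrderDual.toDual` gives the notion with "above" in place of "below". -/
def IsSouthwest (f : α → β) (A B : Finset α) : Prop :=
  ∀ a ∈ A, ∀ b ∈ B, a < b ∧ f a < f b

/-- `f` restricted to `S` is a direct or a skew sum of two nonempty parts. -/
def IsDecomposableOn (f : α → β) (S : Finset α) : Prop :=
  ∃ A B : Finset α, A.Nonempty ∧ B.Nonempty ∧ A ∪ B = S ∧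
    (IsSouthwest f A B ∨ IsSouthwest (OrderDual.toDual ∘ f) A B)

/-- `x < y` are adjacent in `S`, and their values under `f` are adjacent in the image of `S`. -/
structure IsTwinPair (f : α → β) (S : Finset α) (x y : α) : Prop where
  left_mem : x ∈ S
  right_mem : y ∈ S
  lt : x < y
  notMem_Ioo : ∀ z ∈ S, z ∉ Set.Ioo x y
  notMem_uIoo : ∀ z ∈ S, f z ∉ Set.uIoo (f x) (f y)

theorem IsSeparableSeq.toDual_comp (hf : IsSeparableSeq f) :
    IsSeparableSeq (OrderDual.toDual ∘ f) := by
  intro a b c d hab hbc hcd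
  have := hf a b c d hab hbc hcd
  simp only [Function.comp_apply, OrderDual.toDual_lt_toDual]
  tauto

theorem isDecomposableOn_toDual_comp :
    IsDecomposableOn (OrderDual.toDual ∘ f) S ↔ IsDecomposableOn f S := by
  constructor <;> rintro ⟨A, B, hA, hB, hAB, h⟩ <;> exact ⟨A, B, hA, hB, hAB, h.symm⟩

theorem IsSouthwest.disjoint (h : IsSouthwest f A B) : Disjoint A B :=
  Finset.disjoint_left.2 fun a ha hb => lt_irrefl a (h a ha a hb).1

theorem IsSeparableSeq.isDecomposableOn_insert_union (hf : IsSeparableSeq f)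
    (hinj : Function.Injective f) (hA : A.Nonempty) (hB : B.Nonempty) (hAB : IsSouthwest f A B)
    (hm : ∀ a ∈ A ∪ B, a < m) (hAm : IsDecomposableOn f (insert m A)) :
    IsDecomposableOn f (insert m (A ∪ B)) := by
  by_cases hbelow : ∀ a ∈ A, f m < f a
  · obtain ⟨a, ha⟩ := hA
    have hmz : ∀ z ∈ A ∪ B, f m < f z := fun z hz => (Finset.mem_union.1 hz).elim (hbelow z)
      fun hzB => (hbelow a ha).trans (hAB a ha z hzB).2
    refine ⟨A ∪ B, {m}, ⟨a, by simp [ha]⟩, by simp, by grind, Or.inr fun z hz w hw => ?_⟩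
    obtain rfl := Finset.mem_singleton.1 hw
    exact ⟨hm z hz, hmz z hz⟩
  push Not at hbelow
  obtain ⟨v, hv, hvm⟩ := hbelow
  replace hvm : f v < f m := lt_of_le_of_ne hvm (hinj.ne (hm v (by simp [hv])).ne)
  obtain ⟨C, D, hC, hD, hCD, h⟩ := hAm
  have hlt : ∀ c ∈ C, ∀ d ∈ D, c < d := fun c hc d hd =>
    h.elim (fun h => (h c hc d hd).1) fun h => (h c hc d hd).1
  have hmem : ∀ z, z ∈ C ∨ z ∈ D ↔ z = m ∨ z ∈ A := fun z => by
    rw [← Finset.mem_union, hCD, Finset.mem_insert]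
  have hmC : m ∉ C := fun hmC => by
    obtain ⟨d, hd⟩ := hD
    grind
  have hmD : m ∈ D := by grind
  have hCA : C ⊆ A := fun c hc => by grind
  rcases h with hdirect | hskew
  · exact ⟨C, D ∪ B, hC, hD.inl, by grind, Or.inl fun c hc d hd =>
      (Finset.mem_union.1 hd).elim (hdirect c hc d) (hAB c (hCA hc) d)⟩
  · obtain ⟨c, hc⟩ := hC
    obtain ⟨b, hb⟩ := hB
    have hmc : f m < f c := (hskew c hc m hmD).2
    have hvD : v ∈ D := by
      have hvC : v ∉ C := fun hvC => hvm.asymm (hskew v hvC m hmD).2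
      grind
    have hbm : b < m := hm b (by simp [hb])
    -- `c`, `v`, `b`, `m` form the pattern [3142].
    exact absurd ⟨hvm, hmc, (hAB c (hCA hc) b hb).2⟩
      (hf c v b m (hlt c hc v hvD) (hAB v hv b hb).1 hbm).2

theorem IsSeparableSeq.isDecomposableOn (hf : IsSeparableSeq f) (hinj : Function.Injective f)
    (hS : S.Nontrivial) : IsDecomposableOn f S := by
  induction S using Finset.strongInduction with
  | H S ih =>
  set m := S.max' hS.nonempty
  have hmS : m ∈ S := S.max'_mem _
  have hm : ∀ a ∈ S.erase m, a < m := fun a ha => S.lt_max'_of_mem_erase_max' _ ha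
  rcases (hS.erase_nonempty (a := m)).exists_eq_singleton_or_nontrivial with ⟨x, hx⟩ | hnt
  · have hxm : x < m := hm x (by simp [hx])
    refine ⟨{x}, {m}, by simp, by simp, by grind, ?_⟩
    simpa [IsSouthwest, hxm] using (hinj.ne hxm.ne).lt_or_gt
  · obtain ⟨A, B, hA, hB, hAB, h⟩ := ih _ (Finset.erase_ssubset hmS) hnt
    rw [← hAB] at hm
    have hdisj : Disjoint A B := h.elim IsSouthwest.disjoint IsSouthwest.disjoint
    have hAm : IsDecomposableOn f (insert m A) := by
      refine ih _ ?_ ?_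
      · obtain ⟨b, hb⟩ := hB
        have hbS : b ∈ S := Finset.mem_of_mem_erase (hAB ▸ Finset.mem_union_right A hb)
        have hbA : b ∉ insert m A := by
          simp [(hm b (by simp [hb])).ne, Finset.disjoint_right.1 hdisj hb]
        have hsub : insert m A ⊆ S := Finset.insert_subset hmS fun a ha =>
          Finset.mem_of_mem_erase (hAB ▸ Finset.mem_union_left B ha)
        exact (Finset.ssubset_iff_of_subset hsub).2 ⟨b, hbS, hbA⟩
      · obtain ⟨a, ha⟩ := hA
        exact ⟨m, by simp, a, by simp [ha], (hm a (by simp [ha])).ne'⟩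
    rw [← Finset.insert_erase hmS, ← hAB]
    rcases h with h | h
    · exact hf.isDecomposableOn_insert_union hinj hA hB h hm hAm
    · rw [← isDecomposableOn_toDual_comp] at hAm ⊢
      exact hf.toDual_comp.isDecomposableOn_insert_union
        (OrderDual.toDual.injective.comp hinj) hA hB h hm hAm

theorem IsTwinPair.union (h : IsTwinPair f A x y)
    (hB : ∀ z ∈ B, z ∉ Set.Ioo x y ∧ f z ∉ Set.uIoo (f x) (f y)) :
    IsTwinPair f (A ∪ B) x y where
  left_mem := Finset.mem_union_left _ h.left_mem
  right_mem := Finset.mem_union_left _ h.right_mem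
  lt := h.lt
  notMem_Ioo z hz := (Finset.mem_union.1 hz).elim (h.notMem_Ioo z) fun hz => (hB z hz).1
  notMem_uIoo z hz := (Finset.mem_union.1 hz).elim (h.notMem_uIoo z) fun hz => (hB z hz).2

theorem IsTwinPair.union_right (h : IsTwinPair f A x y)
    (hAB : IsSouthwest f A B ∨ IsSouthwest (OrderDual.toDual ∘ f) A B) :
    IsTwinPair f (A ∪ B) x y := by
  refine h.union fun z hz => ?_
  have hx := h.left_mem
  have hy := h.right_mem
  rcases hAB with hAB | hAB
  · obtain ⟨-, hfxz⟩ := hAB x hx z hz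
    obtain ⟨hyz, hfyz⟩ := hAB y hy z hz
    simp [Set.uIoo, hfxz.le, hfyz.le, hyz.le]
  · obtain ⟨-, hfzx⟩ : x < z ∧ f z < f x := hAB x hx z hz
    obtain ⟨hyz, hfzy⟩ : y < z ∧ f z < f y := hAB y hy z hz
    simp [Set.uIoo, hfzx.le, hfzy.le, hyz.le]

theorem IsTwinPair.union_left (h : IsTwinPair f B x y)
    (hAB : IsSouthwest f A B ∨ IsSouthwest (OrderDual.toDual ∘ f) A B) :
    IsTwinPair f (A ∪ B) x y := by
  rw [Finset.union_comm]
  refine h.union fun z hz => ?_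
  have hx := h.left_mem
  have hy := h.right_mem
  rcases hAB with hAB | hAB
  · obtain ⟨hzx, hfzx⟩ := hAB z hz x hx
    obtain ⟨-, hfzy⟩ := hAB z hz y hy
    simp [Set.uIoo, hfzx.le, hfzy.le, hzx.le]
  · obtain ⟨hzx, hfxz⟩ : z < x ∧ f x < f z := hAB z hz x hx
    obtain ⟨-, hfyz⟩ : z < y ∧ f y < f z := hAB z hz y hy
    simp [Set.uIoo, hfxz.le, hfyz.le, hzx.le]

theorem isTwinPair_pair (hxy : x < y) : IsTwinPair f ({x} ∪ {y}) x y where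
  left_mem := by simp
  right_mem := by simp
  lt := hxy
  notMem_Ioo := by simp
  notMem_uIoo := by simp

theorem IsSeparableSeq.exists_isTwinPair (hf : IsSeparableSeq f) (hinj : Function.Injective f)
    (hS : S.Nontrivial) : ∃ x y, IsTwinPair f S x y := by
  induction S using Finset.strongInduction with
  | H S ih =>
  obtain ⟨A, B, hA, hB, rfl, h⟩ := hf.isDecomposableOn hinj hS
  have hdisj : Disjoint A B := h.elim IsSouthwest.disjoint IsSouthwest.disjoint
  rcases hA.exists_eq_singleton_or_nontrivial with ⟨a, rfl⟩ | hAnt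
  · rcases hB.exists_eq_singleton_or_nontrivial with ⟨b, rfl⟩ | hBnt
    · have hab : a < b := h.elim (fun h => (h a (by simp) b (by simp)).1)
        fun h => (h a (by simp) b (by simp)).1
      exact ⟨a, b, isTwinPair_pair hab⟩
    · have hBS : B ⊂ {a} ∪ B := right_lt_sup.2 fun hAB => hA.ne_empty (hdisj.eq_bot_of_le hAB)
      obtain ⟨x, y, hxy⟩ := ih B hBS hBnt
      exact ⟨x, y, hxy.union_left h⟩
  · have hAS : A ⊂ A ∪ B := left_lt_sup.2 fun hBA => hB.ne_empty (hdisj.symm.eq_bot_of_le hBA)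
    obtain ⟨x, y, hxy⟩ := ih A hAS hAnt
    exact ⟨x, y, hxy.union_right h⟩

theorem IsSeparableSeq.exists_covBy [Finite α] [Nontrivial α] {e : α ≃ β}
    (he : IsSeparableSeq e) : ∃ x y, x ⋖ y ∧ (e x ⋖ e y ∨ e y ⋖ e x) := by
  cases nonempty_fintype α
  obtain ⟨x, y, hxy⟩ := he.exists_isTwinPair e.injective Finset.univ_nontrivial
  have hval : Set.uIoo (e x) (e y) = ∅ := Set.eq_empty_of_forall_notMem fun w => by
    simpa using hxy.notMem_uIoo (e.symm w) (Finset.mem_univ _)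
  refine ⟨x, y, ⟨hxy.lt, fun z hxz hzy => hxy.notMem_Ioo z (Finset.mem_univ _) ⟨hxz, hzy⟩⟩, ?_⟩
  rcases (e.injective.ne hxy.lt.ne).lt_or_gt with hlt | hlt
  · exact Or.inl (covBy_iff_Ioo_eq.2 ⟨hlt, Set.uIoo_of_lt hlt ▸ hval⟩)
  · exact Or.inr (covBy_iff_Ioo_eq.2 ⟨hlt, Set.uIoo_of_gt hlt ▸ hval⟩)

end Separable

section Containment

variable {k l m n : ℕ} {ρ : Perm (Fin k)} {τ : Perm (Fin m)} {σ : Perm (Fin n)}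

theorem contains_iff_exists_strictMono :
    Contains τ σ ↔ ∃ f : Fin m → Fin n, StrictMono f ∧ StrictMono (σ ∘ f ∘ τ.symm) := by
  constructor
  · rintro ⟨f, hf⟩
    exact ⟨f, f.strictMono, fun a b hab => (hf _ _).1 (by simpa using hab)⟩
  · rintro ⟨f, hf, hmono⟩
    refine ⟨OrderEmbedding.ofStrictMono f hf, fun a b => ?_⟩
    simpa using (hmono.lt_iff_lt (a := τ a) (b := τ b)).symm

protected theorem Contains.trans (h : Contains ρ τ) (h' : Contains τ σ) : Contains ρ σ := by
  obtain ⟨f, hf⟩ := h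
  obtain ⟨g, hg⟩ := h'
  exact ⟨f.trans g, fun a b => (hf a b).trans (hg _ _)⟩

theorem Contains.length_le (h : Contains τ σ) : m ≤ n := by
  obtain ⟨f, -⟩ := h
  simpa using Fintype.card_le_of_injective f f.injective

theorem Contains.eq {τ σ : Perm (Fin n)} (h : Contains τ σ) : τ = σ := by
  obtain ⟨f, hf, hmono⟩ := contains_iff_exists_strictMono.1 h
  obtain rfl := hf.eq_id
  refine Equiv.ext fun i => ?_
  simpa using (congrFun hmono.eq_id (τ i)).symm

theorem Contains.symm_of_length_le (h : Contains τ σ) (hnm : n ≤ m) : Contains σ τ := by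
  obtain rfl : m = n := h.length_le.antisymm hnm
  obtain rfl := h.eq
  exact h

theorem contains_of_length_le_one (hm : m ≤ 1) (hmn : m ≤ n) : Contains τ σ := by
  have := Fin.subsingleton_iff_le_one.2 hm
  exact contains_iff_exists_strictMono.2
    ⟨Fin.castLE hmn, Fin.strictMono_castLE hmn, Subsingleton.strictMono _⟩

theorem isKing_p2413 : IsKing p2413 := by
  unfold IsKing fdist
  decide

theorem isKing_p3142 : IsKing p3142 := by
  unfold IsKing fdist
  decide

theorem isSeparableSeq_of_not_contains (h2413 : ¬ Contains p2413 σ) (h3142 : ¬ Contains p3142 σ) :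
    IsSeparableSeq σ := by
  intro a b c d hab hbc hcd
  have hpos : StrictMono ![a, b, c, d] := by simp [hab, hbc, hcd]
  constructor
  · rintro ⟨hca, had, hdb⟩
    refine h2413 (contains_iff_exists_strictMono.2 ⟨_, hpos, ?_⟩)
    have : StrictMono ![σ c, σ a, σ d, σ b] := by simp [hca, had, hdb]
    convert this using 1
    funext i
    fin_cases i <;> rfl
  · rintro ⟨hbd, hda, hac⟩
    refine h3142 (contains_iff_exists_strictMono.2 ⟨_, hpos, ?_⟩)
    have : StrictMono ![σ b, σ d, σ a, σ c] := by simp [hbd, hda, hac]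
    convert this using 1
    funext i
    fin_cases i <;> rfl

theorem not_isKing_of_isSeparableSeq (hn : 2 ≤ n) (h : IsSeparableSeq σ) : ¬ IsKing σ := by
  have : Nontrivial (Fin n) := Fin.nontrivial_iff_two_le.2 hn
  obtain ⟨x, y, hxy, hval⟩ := h.exists_covBy
  simp only [Fin.covBy_iff, Nat.covBy_iff_add_one_eq] at hxy hval
  intro hσ
  refine hσ x y hxy.symm ?_
  unfold fdist
  omega

theorem IsKing.contains_p2413_or_contains_p3142 (hσ : IsKing σ) (hn : 2 ≤ n) :
    Contains p2413 σ ∨ Contains p3142 σ := by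
  by_contra! h
  exact not_isKing_of_isSeparableSeq hn (isSeparableSeq_of_not_contains h.1 h.2) hσ

theorem IsKing.contains_of_length_le_four (hτ : IsKing τ) (hm : m ≤ 4)
    (h2413 : Contains p2413 σ) (h3142 : Contains p3142 σ) : Contains τ σ := by
  rcases Nat.lt_or_ge 1 m with hm1 | hm1
  · rcases hτ.contains_p2413_or_contains_p3142 hm1 with h | h
    · exact (h.symm_of_length_le hm).trans h2413
    · exact (h.symm_of_length_le hm).trans h3142
  · exact contains_of_length_le_one hm1 (by have := h2413.length_le; omega)

theorem contains_of_mem_Hset {π : Perm (Fin 5)} (hπ : π ∈ Hset) :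
    Contains p2413 π ∧ Contains p3142 π := by
  simp only [contains_iff_exists_strictMono, Fin.strictMono_iff_lt_succ]
  rcases hπ with rfl | rfl | rfl | rfl
  · exact ⟨⟨![0, 1, 2, 4], by decide⟩, ⟨![1, 2, 3, 4], by decide⟩⟩
  · exact ⟨⟨![0, 1, 2, 3], by decide⟩, ⟨![0, 2, 3, 4], by decide⟩⟩
  · exact ⟨⟨![1, 2, 3, 4], by decide⟩, ⟨![0, 1, 2, 4], by decide⟩⟩
  · exact ⟨⟨![0, 2, 3, 4], by decide⟩, ⟨![0, 1, 2, 3], by decide⟩⟩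

end Containment

section Moebius

variable {l m n : ℕ} {τ : Perm (Fin l)} {π : Perm (Fin m)} {σ : Perm (Fin n)}

open scoped Classical in
/-- The nonempty king permutations strictly contained in `σ`, of all lengths. -/
noncomputable def kingsBelow (σ : Perm (Fin n)) : Finset (Σ l : ℕ, Perm (Fin l)) :=
  (Finset.Ico 1 n).sigma fun _ => {τ | IsKing τ ∧ StrictContains τ σ}

theorem mem_kingsBelow : ⟨l, τ⟩ ∈ kingsBelow σ ↔ 1 ≤ l ∧ IsKing τ ∧ StrictContains τ σ := by
  simp only [kingsBelow, Finset.mem_sigma, Finset.mem_Ico, Finset.mem_filter_univ]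
  exact ⟨fun h => ⟨h.1.1, h.2⟩, fun h => ⟨⟨h.1, h.2.2.2⟩, h.2⟩⟩

theorem kingMu_eq_neg_sum_kingsBelow (hn : 2 ≤ n) (σ : Perm (Fin n)) :
    kingMu n σ = -∑ τ ∈ kingsBelow σ, kingMu τ.1 τ.2 := by
  classical
  obtain ⟨n, rfl⟩ := Nat.exists_eq_add_of_le' hn
  rw [kingMu, kingsBelow, Finset.sum_sigma]
  exact congrArg Neg.neg (Finset.sum_attach (Finset.Ico 1 (n + 2)) fun l =>
    ∑ τ : Perm (Fin l) with IsKing τ ∧ StrictContains τ σ, kingMu l τ)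

theorem StrictContains.kingsBelow_subset (h : StrictContains π σ) :
    kingsBelow π ⊆ kingsBelow σ := by
  rintro ⟨l, τ⟩ hτ
  obtain ⟨hl, hking, hτπ, hlm⟩ := mem_kingsBelow.1 hτ
  exact mem_kingsBelow.2 ⟨hl, hking, hτπ.trans h.1, hlm.trans h.2⟩

theorem kingMu_eq_zero_of_forall_not_contains (hπ : IsKing π) (hm : 2 ≤ m)
    (hπσ : StrictContains π σ)
    (h : ∀ (l : ℕ) (τ : Perm (Fin l)), IsKing τ → StrictContains τ σ → ¬ Contains τ π →
      kingMu l τ = 0) :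
    kingMu n σ = 0 := by
  classical
  have hπmem : (⟨m, π⟩ : Σ l : ℕ, Perm (Fin l)) ∉ kingsBelow π := fun hmem =>
    lt_irrefl m (mem_kingsBelow.1 hmem).2.2.2
  have hsub : insert ⟨m, π⟩ (kingsBelow π) ⊆ kingsBelow σ :=
    Finset.insert_subset (mem_kingsBelow.2 ⟨by omega, hπ, hπσ⟩) hπσ.kingsBelow_subset
  have hvanish : ∀ τ ∈ kingsBelow σ, τ ∉ insert ⟨m, π⟩ (kingsBelow π) → kingMu τ.1 τ.2 = 0 := by
    rintro ⟨l, τ⟩ hτ hτπ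
    obtain ⟨hl, hking, hτσ⟩ := mem_kingsBelow.1 hτ
    refine h l τ hking hτσ fun hcont => hτπ ?_
    rcases hcont.length_le.lt_or_eq with hlm | rfl
    · exact Finset.mem_insert_of_mem (mem_kingsBelow.2 ⟨hl, hking, hcont, hlm⟩)
    · simp [hcont.eq]
  rw [kingMu_eq_neg_sum_kingsBelow (hm.trans hπσ.2.le), ← Finset.sum_subset hsub hvanish,
    Finset.sum_insert hπmem, kingMu_eq_neg_sum_kingsBelow hm π]
  simp

theorem kingMu_eq_zero_of_comparable_or_eq_zero (hπ : IsKing π) (hm : 2 ≤ m)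
    (hπσ : StrictContains π σ)
    (h : ∀ (l : ℕ) (τ : Perm (Fin l)), IsKing τ → StrictContains τ σ →
      Contains τ π ∨ Contains π τ ∨ kingMu l τ = 0) :
    kingMu n σ = 0 := by
  induction n using Nat.strong_induction_on with
  | h n ih =>
  refine kingMu_eq_zero_of_forall_not_contains hπ hm hπσ fun l τ hτ hτσ hτπ => ?_
  rcases h l τ hτ hτσ with hle | hge | hzero
  · exact absurd hle hτπ
  · have hml : m < l := lt_of_not_ge fun hlm => hτπ (hge.symm_of_length_le hlm)
    exact ih l hτσ.2 ⟨hge, hml⟩ fun k ρ hρ hρτ =>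
      h k ρ hρ ⟨hρτ.1.trans hτσ.1, hρτ.2.trans hτσ.2⟩
  · exact hzero

theorem kingMu_eq_zero_of_forall_contains (hπ : IsKing π) (hm : 2 ≤ m) (hπσ : StrictContains π σ)
    (h : ∀ (l : ℕ) (τ : Perm (Fin l)), 2 ≤ l → IsKing τ → StrictContains τ σ → Contains π τ) :
    kingMu n σ = 0 := by
  refine kingMu_eq_zero_of_comparable_or_eq_zero hπ hm hπσ fun l τ hτ hτσ => ?_
  rcases Nat.lt_or_ge 1 l with hl | hl
  · exact .inr (.inl (h l τ hl hτ hτσ))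
  · exact .inl (contains_of_length_le_one hl (by omega))

theorem IsKing.kingMu_eq_zero_of_not_contains (hσ : IsKing σ) (hn : 4 < n)
    (h : ¬ Contains p3142 σ ∨ ¬ Contains p2413 σ) : kingMu n σ = 0 := by
  have hking := hσ.contains_p2413_or_contains_p3142 (by omega)
  rcases h with h | h
  · refine kingMu_eq_zero_of_forall_contains isKing_p2413 (by omega)
      ⟨hking.resolve_right h, hn⟩ fun l τ hl hτ hτσ => ?_
    exact (hτ.contains_p2413_or_contains_p3142 hl).resolve_right fun hcont =>
      h (hcont.trans hτσ.1)
  · refine kingMu_eq_zero_of_forall_contains isKing_p3142 (by omega)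
      ⟨hking.resolve_left h, hn⟩ fun l τ hl hτ hτσ => ?_
    exact (hτ.contains_p2413_or_contains_p3142 hl).resolve_left fun hcont =>
      h (hcont.trans hτσ.1)

theorem mu_eq_zero_of_unique_H_general (hπ : IsKing π) (h2413 : Contains p2413 π)
    (h3142 : Contains p3142 π) (hπσ : StrictContains π σ)
    (havoid : ∀ (l : ℕ) (π' : Perm (Fin l)), IsKing π' → StrictContains π' σ →
      ¬ Contains π π' → (¬ Contains p3142 π' ∨ ¬ Contains p2413 π')) :
    kingMu n σ = 0 := by
  have hm : 4 ≤ m := h2413.length_le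
  refine kingMu_eq_zero_of_comparable_or_eq_zero hπ (by omega) hπσ fun l τ hτ hτσ => ?_
  by_cases hπτ : Contains π τ
  · exact .inr (.inl hπτ)
  · rcases le_or_gt l 4 with hl | hl
    · exact .inl (hτ.contains_of_length_le_four hl h2413 h3142)
    · exact .inr (.inr (hτ.kingMu_eq_zero_of_not_contains hl (havoid l τ hτ hτσ hπτ)))

end Moebius

/-- if `σ ∈ K_n`, `n > 5`, there is exactly one king `π ≺ σ` with
`π ∈ ℍ`, and every king `π' ≺ σ` not containing `π` avoids [3142] or avoids [2413],
then `μ(σ) = 0`. -/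
theorem mu_eq_zero_of_unique_H (n : ℕ) (hn : 5 < n) (σ : Equiv.Perm (Fin n)) (hσ : IsKing σ)
    (π : Equiv.Perm (Fin 5)) (hπking : IsKing π) (hπH : π ∈ Hset)
    (hπσ : StrictContains π σ)
    (huniq : ∀ π₂ : Equiv.Perm (Fin 5),
      IsKing π₂ → π₂ ∈ Hset → StrictContains π₂ σ → π₂ = π)
    (havoid : ∀ (l : ℕ) (π' : Equiv.Perm (Fin l)), IsKing π' → StrictContains π' σ →
      ¬ Contains π π' → (¬ Contains p3142 π' ∨ ¬ Contains p2413 π')) :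
    kingMu n σ = 0 := by
  obtain ⟨h2413, h3142⟩ := contains_of_mem_Hset hπH
  exact mu_eq_zero_of_unique_H_general hπking h2413 h3142 hπσ havoid
end
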